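/- Non-stationary phase with h-dependent phase (Proposition A.1 of the paper). Let d ≥ 1, let K ⊂ ℝ^d be compact, let h₀ ∈ (0,1], ε > 0 and C > 0. For each h ∈ (0,h₀] let a(·,h) ∈ C^∞(ℝ^d,ℂ) and φ(·,h) ∈ C^∞(ℝ^d,ℝ) be such that: (i) supp a(·,h) ⊆ K for all h; (ii) for every multi-index β there is a constant M_β with sup_{h∈(0,h₀]} sup_{x∈ℝ^d} |∂^β a(x,h)| ≤ M_β and sup_{h∈(0,h₀]} sup_{x∈K} |∂^β φ(x,h)| ≤ M_β; (iii) |∇_x φ(x,h)| ≥ C h^{1/2−ε} for all x ∈ supp a(·,h) and all h ∈ (0,h₀]. Then the oscillatory integral I_h := ∫_{ℝ^d} a(x,h) e^{i φ(x,h)/h} dx satisfies I_h = O(h^∞): for every N ∈ ℕ there exists C_N > 0 such that |I_h| ≤ C_N h^N for all h ∈ (0,h₀]. -/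

import Mathlib

open MeasureTheory Complex

namespace NSP

/-- The `j`-th component of `v / |v|^2`. -/
noncomputable def F {d : ℕ} (j : Fin d) (v : EuclideanSpace ℝ (Fin d)) : ℝ := (‖v‖ ^ 2)⁻¹ * v j

lemma F_contDiffAt {d : ℕ} (j : Fin d) {v : EuclideanSpace ℝ (Fin d)} (hv : v ≠ 0) :
    ContDiffAt ℝ (⊤ : ℕ∞) (F j) v := by
  unfold F
  refine ContDiffAt.mul (ContDiffAt.inv ?_ ?_) ?_
  · exact (contDiff_norm_sq ℝ).contDiffAt
  · simpa using hv
  · exact (EuclideanSpace.proj j : EuclideanSpace ℝ (Fin d) →L[ℝ] ℝ).contDiff.contDiffAt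

lemma F_scale {d : ℕ} (j : Fin d) (v : EuclideanSpace ℝ (Fin d)) {r : ℝ} (hr : 0 < r) :
    F j v = r⁻¹ * F j (r⁻¹ • v) := by
  unfold F
  rw [norm_smul, norm_inv, Real.norm_of_nonneg hr.le, PiLp.smul_apply, smul_eq_mul, mul_pow,
    mul_inv, inv_pow, inv_inv]
  field_simp

lemma F_sum {d : ℕ} {v : EuclideanSpace ℝ (Fin d)} (hv : v ≠ 0) :
    ∑ j, F j v * v j = 1 := by
  unfold F
  simp_rw [mul_assoc, ← Finset.mul_sum]
  rw [EuclideanSpace.norm_sq_eq]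
  have : ∑ i, ‖v i‖ ^ 2 ≠ 0 := by
    rw [← EuclideanSpace.norm_sq_eq]; simpa using hv
  rw [inv_mul_eq_one₀ this]
  exact Finset.sum_congr rfl fun i _ => by rw [Real.norm_eq_abs, sq_abs, sq]

lemma exists_unif {α : Type*} (n : ℕ) (f : ℕ → α → ℝ) (h : ∀ m, ∃ M, ∀ x, f m x ≤ M) :
    ∃ B, 1 ≤ B ∧ ∀ m ≤ n, ∀ x, f m x ≤ B := by
  choose M hM using h
  refine ⟨1 + ∑ m ∈ Finset.range (n + 1), |M m|, ?_, ?_⟩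
  · have : 0 ≤ ∑ m ∈ Finset.range (n + 1), |M m| := Finset.sum_nonneg fun _ _ => abs_nonneg _
    linarith
  · intro m hm x
    have := Finset.single_le_sum (f := fun m => |M m|) (fun _ _ => abs_nonneg _)
      (Finset.mem_range.2 (Nat.lt_succ_of_le hm))
    have h2 := hM m x
    have h3 := le_abs_self (M m)
    linarith

lemma F_bound {d : ℕ} (j : Fin d) (n : ℕ) : ∃ B, 1 ≤ B ∧ ∀ m ≤ n,
    ∀ v : Metric.sphere (0 : EuclideanSpace ℝ (Fin d)) 1, ‖iteratedFDeriv ℝ m (F j) v‖ ≤ B := by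
  refine exists_unif n (fun m (v : Metric.sphere (0 : EuclideanSpace ℝ (Fin d)) 1) =>
    ‖iteratedFDeriv ℝ m (F j) v‖) fun m => ?_
  have hc : ContinuousOn (iteratedFDeriv ℝ m (F j))
      (Metric.sphere (0 : EuclideanSpace ℝ (Fin d)) 1) := by
    intro v hv
    have hv0 : v ≠ 0 := by rintro rfl; simp at hv
    have : ContDiffAt ℝ (0 : ℕ) (iteratedFDeriv ℝ m (F j)) v :=
      (F_contDiffAt j hv0).iteratedFDeriv_right (m := (0 : ℕ)) (by
        rw [← Nat.cast_add]; exact_mod_cast le_top)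
    exact this.continuousAt.continuousWithinAt
  obtain ⟨M, hM⟩ := (isCompact_sphere (0 : EuclideanSpace ℝ (Fin d)) 1).exists_bound_of_continuousOn hc
  exact ⟨M, fun v => hM v v.2⟩

lemma gradient_contDiff {d : ℕ} {f : EuclideanSpace ℝ (Fin d) → ℝ} (hf : ContDiff ℝ (⊤ : ℕ∞) f) :
    ContDiff ℝ (⊤ : ℕ∞) (gradient f) := by
  have : ContDiff ℝ (⊤ : ℕ∞) (fderiv ℝ f) := hf.fderiv_right (by simp)
  exact (InnerProductSpace.toDual ℝ (EuclideanSpace ℝ (Fin d))).symm.contDiff.comp this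

lemma norm_gradient {d : ℕ} (f : EuclideanSpace ℝ (Fin d) → ℝ) (n : ℕ)
    (x : EuclideanSpace ℝ (Fin d)) :
    ‖iteratedFDeriv ℝ n (gradient f) x‖ = ‖iteratedFDeriv ℝ (n + 1) f x‖ := by
  rw [← norm_iteratedFDeriv_fderiv, ← toDual_comp_gradient]
  exact ((InnerProductSpace.toDual ℝ (EuclideanSpace ℝ (Fin d))).norm_iteratedFDeriv_comp_left
    (gradient f) x n).symm

lemma gradient_apply {d : ℕ} (f : EuclideanSpace ℝ (Fin d) → ℝ) (j : Fin d)
    (x : EuclideanSpace ℝ (Fin d)) :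
    gradient f x j = fderiv ℝ f x (EuclideanSpace.single j 1) := by
  rw [← toDual_gradient, InnerProductSpace.toDual_apply_apply,
    EuclideanSpace.inner_single_right]
  simp

lemma V_contDiffAt {d : ℕ} {f : EuclideanSpace ℝ (Fin d) → ℝ} (hf : ContDiff ℝ (⊤ : ℕ∞) f)
    (j : Fin d) {x : EuclideanSpace ℝ (Fin d)} (hx : gradient f x ≠ 0) :
    ContDiffAt ℝ (⊤ : ℕ∞) (fun y => F j (gradient f y)) x :=
  (F_contDiffAt j hx).comp x (gradient_contDiff hf).contDiffAt

lemma isOpen_grad_ne {d : ℕ} {f : EuclideanSpace ℝ (Fin d) → ℝ} (hf : ContDiff ℝ (⊤ : ℕ∞) f) :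
    IsOpen {x | gradient f x ≠ 0} :=
  isOpen_ne_fun (gradient_contDiff hf).continuous continuous_const

lemma V_bound {d : ℕ} {ι : Type*} (S : ι → Set (EuclideanSpace ℝ (Fin d)))
    (φ : ι → EuclideanSpace ℝ (Fin d) → ℝ) (L : ι → ℝ) (c : ℝ) (hc : 0 < c) (hL : ∀ i, 1 ≤ L i)
    (hφ : ∀ i, ContDiff ℝ (⊤ : ℕ∞) (φ i))
    (hφb : ∀ n : ℕ, ∃ M : ℝ, ∀ i, ∀ x ∈ S i, ‖iteratedFDeriv ℝ n (φ i) x‖ ≤ M)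
    (hg : ∀ i, ∀ x ∈ S i, c ≤ L i * ‖gradient (φ i) x‖) (j : Fin d) (n : ℕ) :
    ∃ M : ℝ, ∀ i, ∀ x ∈ S i,
      ‖iteratedFDeriv ℝ n (fun y => F j (gradient (φ i) y)) x‖ ≤ M * L i ^ (1 + n) := by
  obtain ⟨B, hB1, hB⟩ := F_bound j n
  obtain ⟨P, hP1, hP⟩ := exists_unif n (fun m (q : Σ i, S i) =>
    ‖iteratedFDeriv ℝ (m + 1) (φ q.1) q.2‖) (fun m => by
      obtain ⟨M, hM⟩ := hφb (m + 1)
      exact ⟨M, fun q => hM q.1 q.2 q.2.2⟩)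
  set A := max 1 c⁻¹ with hA
  have hA1 : 1 ≤ A := le_max_left _ _
  refine ⟨A * ((n.factorial : ℝ) * B * (A * P) ^ n), fun i x hx => ?_⟩
  have hLi := hL i
  set r := ‖gradient (φ i) x‖ with hr
  have hgx := hg i x hx
  have hr0 : 0 < r := by
    by_contra hcon
    have : r = 0 := le_antisymm (not_lt.1 hcon) (norm_nonneg _)
    rw [← hr, this] at hgx; linarith
  have hrinv : r⁻¹ ≤ A * L i := by
    calc r⁻¹ ≤ c⁻¹ * L i := by
          rw [inv_mul_eq_div, inv_le_comm₀ hr0 (by positivity), inv_div, div_le_iff₀ (by positivity)]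
          linarith
      _ ≤ A * L i := by gcongr; exact le_max_right _ _
  have hne : gradient (φ i) x ≠ 0 := norm_pos_iff.1 hr0
  set f : EuclideanSpace ℝ (Fin d) → EuclideanSpace ℝ (Fin d) :=
    fun y => r⁻¹ • gradient (φ i) y with hf
  have hfs : ContDiff ℝ (⊤ : ℕ∞) f := (gradient_contDiff (hφ i)).const_smul r⁻¹
  have hfx : ‖f x‖ = 1 := by
    simp only [hf, norm_smul, norm_inv, Real.norm_of_nonneg hr0.le, ← hr]
    exact inv_mul_cancel₀ hr0.ne'
  have hfx0 : f x ≠ 0 := by rw [← norm_pos_iff, hfx]; norm_num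
  have heq : (fun y => F j (gradient (φ i) y)) = fun y => r⁻¹ • (F j ∘ f) y := by
    ext y; exact F_scale j _ hr0
  have hcd : ContDiffAt ℝ n (F j ∘ f) x :=
    ((F_contDiffAt j hfx0).comp x hfs.contDiffAt).of_le (by exact_mod_cast le_top)
  rw [heq, iteratedFDeriv_const_smul_apply' hcd, norm_smul, norm_inv, Real.norm_of_nonneg hr0.le]
  have ht : IsOpen {v : EuclideanSpace ℝ (Fin d) | v ≠ 0} := isOpen_ne
  have hs : IsOpen {y | f y ≠ 0} := ht.preimage hfs.continuous
  have key : ‖iteratedFDeriv ℝ n (F j ∘ f) x‖ ≤ n.factorial * B * (A * P * L i) ^ n := by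
    rw [← iteratedFDerivWithin_of_isOpen n hs hfx0]
    refine norm_iteratedFDerivWithin_comp_le (t := {v | v ≠ 0}) (N := (⊤ : ℕ∞))
      (fun v hv => (F_contDiffAt j hv).contDiffWithinAt) hfs.contDiffOn (by exact_mod_cast le_top)
      ht.uniqueDiffOn hs.uniqueDiffOn (fun y hy => hy) hfx0 ?_ ?_
    · intro m hm
      rw [iteratedFDerivWithin_of_isOpen m ht hfx0]
      exact hB m hm ⟨f x, by simpa using hfx⟩
    · intro m hm1 hm
      rw [iteratedFDerivWithin_of_isOpen m hs hfx0, hf, iteratedFDeriv_const_smul_apply'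
        ((gradient_contDiff (hφ i)).contDiffAt.of_le (by exact_mod_cast le_top)),
        norm_smul, norm_inv, Real.norm_of_nonneg hr0.le, norm_gradient]
      calc r⁻¹ * ‖iteratedFDeriv ℝ (m + 1) (φ i) x‖ ≤ (A * L i) * P := by
            gcongr
            exact hP m hm ⟨i, x, hx⟩
        _ = A * P * L i := by ring
        _ ≤ _ := by
          refine le_self_pow₀ ?_ (by omega)
          exact one_le_mul_of_one_le_of_one_le (one_le_mul_of_one_le_of_one_le hA1 hP1) hLi
  calc r⁻¹ * _ ≤ (A * L i) * (n.factorial * B * (A * P * L i) ^ n) := by gcongr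
    _ = _ := by ring

/-- Symbol class. -/
def Sym {d : ℕ} {ι : Type*} (S : ι → Set (EuclideanSpace ℝ (Fin d))) (L : ι → ℝ) (k : ℕ)
    (b : ι → EuclideanSpace ℝ (Fin d) → ℂ) : Prop :=
  (∀ i, ContDiff ℝ (⊤ : ℕ∞) (b i)) ∧ (∀ i, tsupport (b i) ⊆ S i) ∧
  ∀ n : ℕ, ∃ M : ℝ, ∀ i x, ‖iteratedFDeriv ℝ n (b i) x‖ ≤ M * L i ^ (k + n)

lemma Sym.mulV {d : ℕ} {ι : Type*} {S : ι → Set (EuclideanSpace ℝ (Fin d))}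
    {φ : ι → EuclideanSpace ℝ (Fin d) → ℝ} {L : ι → ℝ} (hL : ∀ i, 1 ≤ L i)
    (hφ : ∀ i, ContDiff ℝ (⊤ : ℕ∞) (φ i)) (j : Fin d)
    (hne : ∀ i, ∀ x ∈ S i, gradient (φ i) x ≠ 0)
    (hV : ∀ n : ℕ, ∃ M : ℝ, ∀ i, ∀ x ∈ S i,
      ‖iteratedFDeriv ℝ n (fun y => F j (gradient (φ i) y)) x‖ ≤ M * L i ^ (1 + n))
    {k : ℕ} {b : ι → EuclideanSpace ℝ (Fin d) → ℂ} (hb : Sym S L k b) :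
    Sym S L (k + 1) (fun i x => F j (gradient (φ i) x) • b i x) := by
  obtain ⟨hb1, hb2, hb3⟩ := hb
  have hts : ∀ i, tsupport (fun x => F j (gradient (φ i) x) • b i x) ⊆ tsupport (b i) := fun i =>
    closure_mono (Function.support_smul_subset_right (fun x => F j (gradient (φ i) x)) (b i))
  refine ⟨fun i => ?_, fun i => (hts i).trans (hb2 i), fun n => ?_⟩
  · rw [contDiff_iff_contDiffAt]
    intro x
    by_cases hx : x ∈ tsupport (b i)
    · exact (V_contDiffAt (hφ i) j (hne i x (hb2 i hx))).smul (hb1 i).contDiffAt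
    · have : (fun x => F j (gradient (φ i) x) • b i x) =ᶠ[nhds x] fun _ => 0 :=
        notMem_tsupport_iff_eventuallyEq.1 fun h => hx (hts i h)
      exact contDiffAt_const.congr_of_eventuallyEq this
  · choose M hM using hV
    choose M' hM' using hb3
    refine ⟨∑ m ∈ Finset.range (n + 1), (n.choose m : ℝ) * |M m| * |M' (n - m)|, fun i x => ?_⟩
    have hLi := hL i
    by_cases hx : x ∈ tsupport (b i)
    · have hxs := hb2 i hx
      have hs := isOpen_grad_ne (hφ i)
      have hxn : x ∈ {x | gradient (φ i) x ≠ 0} := hne i x hxs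
      rw [← iteratedFDerivWithin_of_isOpen n hs hxn]
      refine (norm_iteratedFDerivWithin_smul_le (N := (⊤ : ℕ∞)) (s := {x | gradient (φ i) x ≠ 0})
        (fun y hy => (V_contDiffAt (hφ i) j hy).contDiffWithinAt) (hb1 i).contDiffOn
        hs.uniqueDiffOn hxn (by exact_mod_cast le_top)).trans ?_
      rw [Finset.sum_mul]
      refine Finset.sum_le_sum fun m hm => ?_
      have hmn : m ≤ n := Nat.lt_succ_iff.1 (Finset.mem_range.1 hm)
      rw [iteratedFDerivWithin_of_isOpen m hs hxn, iteratedFDerivWithin_of_isOpen (n - m) hs hxn]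
      have h1 : ‖iteratedFDeriv ℝ m (fun y => F j (gradient (φ i) y)) x‖ ≤ |M m| * L i ^ (1 + m) :=
        (hM m i x hxs).trans (by gcongr; exact le_abs_self _)
      have h2 : ‖iteratedFDeriv ℝ (n - m) (b i) x‖ ≤ |M' (n - m)| * L i ^ (k + (n - m)) :=
        (hM' (n - m) i x).trans (by gcongr; exact le_abs_self _)
      calc _ ≤ (n.choose m : ℝ) * (|M m| * L i ^ (1 + m)) *
            (|M' (n - m)| * L i ^ (k + (n - m))) := by gcongr
        _ = (n.choose m : ℝ) * |M m| * |M' (n - m)| * (L i ^ (1 + m) * L i ^ (k + (n - m))) := by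
          ring
        _ = _ := by
          rw [← pow_add]; congr 2; omega
    · have : iteratedFDeriv ℝ n (fun x => F j (gradient (φ i) x) • b i x) x = 0 := by
        by_contra h
        exact hx (hts i (tsupport_iteratedFDeriv_subset (𝕜 := ℝ) n (subset_tsupport _ h)))
      rw [this, norm_zero]
      refine mul_nonneg (Finset.sum_nonneg fun _ _ => by positivity) (by positivity)

lemma Sym.deriv {d : ℕ} {ι : Type*} {S : ι → Set (EuclideanSpace ℝ (Fin d))}
    {L : ι → ℝ} (j : Fin d)
    {k : ℕ} {b : ι → EuclideanSpace ℝ (Fin d) → ℂ} (hb : Sym S L k b) :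
    Sym S L (k + 1) (fun i x => fderiv ℝ (b i) x (EuclideanSpace.single j 1)) := by
  obtain ⟨hb1, hb2, hb3⟩ := hb
  have hd : ∀ i, ContDiff ℝ (⊤ : ℕ∞) (fderiv ℝ (b i)) := fun i => (hb1 i).fderiv_right (by simp)
  refine ⟨fun i => (hd i).clm_apply contDiff_const,
    fun i => (tsupport_fderiv_apply_subset ℝ _).trans (hb2 i), fun n => ?_⟩
  obtain ⟨M, hM⟩ := hb3 (n + 1)
  refine ⟨M, fun i x => ?_⟩
  refine (norm_iteratedFDeriv_clm_apply_const (hd i).contDiffAt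
    (by exact_mod_cast le_top)).trans ?_
  rw [norm_iteratedFDeriv_fderiv]
  simp only [PiLp.norm_single, norm_one, one_mul]
  refine (hM i x).trans (le_of_eq ?_)
  congr 2; omega

lemma Sym.sum {d : ℕ} {ι : Type*} {S : ι → Set (EuclideanSpace ℝ (Fin d))}
    (hS : ∀ i, IsClosed (S i)) {L : ι → ℝ}
    {k : ℕ} {b : Fin d → ι → EuclideanSpace ℝ (Fin d) → ℂ} (hb : ∀ j, Sym S L k (b j)) :
    Sym S L k (fun i x => ∑ j, b j i x) := by
  refine ⟨fun i => ContDiff.sum fun j _ => (hb j).1 i, fun i => ?_, fun n => ?_⟩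
  · refine closure_minimal (fun x hx => ?_) (hS i)
    obtain ⟨j, -, hj⟩ := Finset.exists_ne_zero_of_sum_ne_zero hx
    exact (hb j).2.1 i (subset_tsupport _ hj)
  · choose M hM using fun j => (hb j).2.2 n
    refine ⟨∑ j, M j, fun i x => ?_⟩
    rw [iteratedFDeriv_fun_sum_apply
      (fun j _ => ((hb j).1 i).contDiffAt.of_le (by exact_mod_cast le_top)), Finset.sum_mul]
    exact (norm_sum_le _ _).trans (Finset.sum_le_sum fun j _ => hM j i x)


lemma fderiv_osc {d : ℕ} {f : EuclideanSpace ℝ (Fin d) → ℝ} (hf : ContDiff ℝ (⊤ : ℕ∞) f) (h : ℝ)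
    (x v : EuclideanSpace ℝ (Fin d)) :
    fderiv ℝ (fun x => Complex.exp (Complex.I * (f x : ℂ) / (h : ℂ))) x v =
      Complex.exp (Complex.I * (f x : ℂ) / (h : ℂ)) * (Complex.I * (fderiv ℝ f x v : ℂ) / h) := by
  have h1 : HasFDerivAt f (fderiv ℝ f x) x := (hf.differentiable (by simp) x).hasFDerivAt
  have h2 : HasFDerivAt (fun x => (f x : ℂ)) (Complex.ofRealCLM.comp (fderiv ℝ f x)) x :=
    Complex.ofRealCLM.hasFDerivAt.comp x h1
  have h3 := ((h2.const_mul (Complex.I / h))).cexp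
  have h4 : ∀ x, Complex.I * (f x : ℂ) / (h : ℂ) = Complex.I / h * (f x : ℂ) := by
    intro x; ring
  simp_rw [h4]
  rw [h3.fderiv]
  simp only [ContinuousLinearMap.smul_apply, ContinuousLinearMap.comp_apply,
    Complex.ofRealCLM_apply, smul_eq_mul]
  ring

lemma ibp_sum {d : ℕ} {e : EuclideanSpace ℝ (Fin d) → ℂ} (hes : ContDiff ℝ (⊤ : ℕ∞) e)
    {u : Fin d → EuclideanSpace ℝ (Fin d) → ℂ} (hu : ∀ j, ContDiff ℝ (⊤ : ℕ∞) (u j))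
    (hus : ∀ j, HasCompactSupport (u j)) :
    ∫ x, ∑ j, u j x * fderiv ℝ e x (EuclideanSpace.single j 1) =
      - ∫ x, (∑ j, fderiv ℝ (u j) x (EuclideanSpace.single j 1)) * e x := by
  have hfu : ∀ j, Continuous (fun x => fderiv ℝ (u j) x (EuclideanSpace.single j 1)) := fun j =>
    ((hu j).continuous_fderiv (by simp)).clm_apply continuous_const
  have hfe : ∀ j : Fin d, Continuous (fun x => fderiv ℝ e x (EuclideanSpace.single j 1)) :=
    fun j => (hes.continuous_fderiv (by simp)).clm_apply continuous_const
  have i1 : ∀ j, Integrable (fun x => fderiv ℝ (u j) x (EuclideanSpace.single j 1) * e x) :=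
    fun j => ((hfu j).mul hes.continuous).integrable_of_hasCompactSupport
      ((hus j).fderiv_apply ℝ _).mul_right
  have i2 : ∀ j, Integrable (fun x => u j x * fderiv ℝ e x (EuclideanSpace.single j 1)) :=
    fun j => ((hu j).continuous.mul (hfe j)).integrable_of_hasCompactSupport (hus j).mul_right
  have i3 : ∀ j, Integrable (fun x => u j x * e x) :=
    fun j => ((hu j).continuous.mul hes.continuous).integrable_of_hasCompactSupport
      (hus j).mul_right
  have ibp : ∀ j, ∫ x, u j x * fderiv ℝ e x (EuclideanSpace.single j 1) =
      - ∫ x, fderiv ℝ (u j) x (EuclideanSpace.single j 1) * e x := fun j =>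
    integral_mul_fderiv_eq_neg_fderiv_mul_of_integrable (i1 j) (i2 j) (i3 j)
      (fun x _ => (hu j).differentiable (by simp) x) (fun x _ => hes.differentiable (by simp) x)
  simp_rw [Finset.sum_mul]
  rw [integral_finset_sum _ (fun j _ => i2 j), integral_finset_sum _ (fun j _ => i1 j),
    ← Finset.sum_neg_distrib]
  exact Finset.sum_congr rfl fun j _ => ibp j

lemma osc_sum {d : ℕ} {f : EuclideanSpace ℝ (Fin d) → ℝ} (hf : ContDiff ℝ (⊤ : ℕ∞) f)
    {b : EuclideanSpace ℝ (Fin d) → ℂ} (h : ℝ)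
    (hne : ∀ x ∈ tsupport b, gradient f x ≠ 0) (x : EuclideanSpace ℝ (Fin d)) :
    ∑ j, (F j (gradient f x) • b x) *
      fderiv ℝ (fun x => Complex.exp (Complex.I * (f x : ℂ) / (h : ℂ))) x
        (EuclideanSpace.single j 1) =
      (Complex.I / h) * (b x * Complex.exp (Complex.I * (f x : ℂ) / (h : ℂ))) := by
  by_cases hx : b x = 0
  · simp [hx]
  · have hg := hne x (subset_tsupport _ hx)
    have h1 : ((∑ j, F j (gradient f x) * gradient f x j : ℝ) : ℂ) = 1 := by
      rw [F_sum hg]; simp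
    calc _ = ∑ j, (Complex.I / h) * (b x * Complex.exp (Complex.I * (f x : ℂ) / (h : ℂ))) *
          ((F j (gradient f x) * gradient f x j : ℝ) : ℂ) := by
          refine Finset.sum_congr rfl fun j _ => ?_
          rw [fderiv_osc hf, gradient_apply f j x]
          simp only [Complex.real_smul, Complex.ofReal_mul]
          ring
      _ = _ := by
        rw [← Finset.mul_sum, ← Complex.ofReal_sum, h1, mul_one]

lemma osc_step {d : ℕ} {f : EuclideanSpace ℝ (Fin d) → ℝ} (hf : ContDiff ℝ (⊤ : ℕ∞) f)
    {b : EuclideanSpace ℝ (Fin d) → ℂ} {h : ℝ} (hh : 0 < h)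
    (hbs : HasCompactSupport b)
    (hne : ∀ x ∈ tsupport b, gradient f x ≠ 0)
    (hu : ∀ j, ContDiff ℝ (⊤ : ℕ∞) (fun x => F j (gradient f x) • b x)) :
    ‖∫ x, b x * Complex.exp (Complex.I * (f x : ℂ) / (h : ℂ))‖ =
      h * ‖∫ x, (∑ j, fderiv ℝ (fun y => F j (gradient f y) • b y) x (EuclideanSpace.single j 1)) *
        Complex.exp (Complex.I * (f x : ℂ) / (h : ℂ))‖ := by
  have hofr : ContDiff ℝ (⊤ : ℕ∞) (fun x => (f x : ℂ)) := Complex.ofRealCLM.contDiff.comp hf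
  have hes : ContDiff ℝ (⊤ : ℕ∞) (fun x => Complex.exp (Complex.I * (f x : ℂ) / (h : ℂ))) :=
    ((contDiff_const.mul hofr).div_const _).cexp
  have hus : ∀ j, HasCompactSupport (fun x => F j (gradient f x) • b x) := fun j =>
    HasCompactSupport.smul_left (f := fun x => F j (gradient f x)) hbs
  have hmain := ibp_sum hes hu hus
  rw [integral_congr_ae (Filter.Eventually.of_forall (osc_sum hf h hne)),
    integral_const_mul] at hmain
  have hn := congrArg norm hmain
  rw [norm_neg, norm_mul, norm_div, Complex.norm_I, Complex.norm_real,
    Real.norm_of_nonneg hh.le] at hn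
  rw [← hn, ← mul_assoc, mul_one_div_cancel hh.ne', one_mul]

lemma core {d : ℕ} {ι : Type*} (S : ι → Set (EuclideanSpace ℝ (Fin d)))
    (K : Set (EuclideanSpace ℝ (Fin d))) (hK : IsCompact K) (hSK : ∀ i, S i ⊆ K)
    (hS : ∀ i, IsClosed (S i))
    (φ : ι → EuclideanSpace ℝ (Fin d) → ℝ) (L : ι → ℝ) (c : ℝ) (hc : 0 < c) (hL : ∀ i, 1 ≤ L i)
    (hφ : ∀ i, ContDiff ℝ (⊤ : ℕ∞) (φ i))
    (hφb : ∀ n : ℕ, ∃ M : ℝ, ∀ i, ∀ x ∈ S i, ‖iteratedFDeriv ℝ n (φ i) x‖ ≤ M)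
    (hg : ∀ i, ∀ x ∈ S i, c ≤ L i * ‖gradient (φ i) x‖)
    (h : ι → ℝ) (hh : ∀ i, 0 < h i)
    (m k : ℕ) (b : ι → EuclideanSpace ℝ (Fin d) → ℂ) (hb : Sym S L k b) :
    ∃ M : ℝ, ∀ i, ‖∫ x, b i x * Complex.exp (Complex.I * (φ i x : ℂ) / (h i : ℂ))‖ ≤
      M * (h i ^ m * L i ^ (k + 2 * m)) := by
  induction m generalizing k b with
  | zero =>
    obtain ⟨hb1, hb2, hb3⟩ := hb
    obtain ⟨M, hM⟩ := hb3 0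
    refine ⟨M * volume.real K, fun i => ?_⟩
    have hsub : Function.support (fun x => b i x *
        Complex.exp (Complex.I * (φ i x : ℂ) / (h i : ℂ))) ⊆ K := fun x hx =>
      hSK i (hb2 i (subset_tsupport _ (left_ne_zero_of_mul hx)))
    rw [← setIntegral_eq_integral_of_forall_compl_eq_zero
      (fun x hx => Function.notMem_support.1 fun hx' => hx (hsub hx'))]
    refine (norm_setIntegral_le_of_norm_le_const (C := M * L i ^ k) hK.measure_lt_top
      fun x _ => ?_).trans (le_of_eq ?_)
    · have h1 := hM i x
      rw [norm_iteratedFDeriv_zero] at h1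
      have h2 : Complex.I * (φ i x : ℂ) / (h i : ℂ) = ((φ i x / h i : ℝ) : ℂ) * Complex.I := by
        push_cast; ring
      rw [norm_mul, h2, Complex.norm_exp_ofReal_mul_I, mul_one]
      exact h1
    · simp; ring
  | succ m ih =>
    have hne : ∀ i, ∀ x ∈ S i, gradient (φ i) x ≠ 0 := by
      intro i x hx h0
      have := hg i x hx
      rw [h0] at this
      simp at this
      linarith
    have hu : ∀ j, Sym S L (k + 1) (fun i x => F j (gradient (φ i) x) • b i x) := fun j =>
      hb.mulV hL hφ j hne (V_bound S φ L c hc hL hφ hφb hg j)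
    obtain ⟨M, hM⟩ := ih (k + 1 + 1) _ (Sym.sum hS fun j => (hu j).deriv j)
    refine ⟨M, fun i => ?_⟩
    rw [osc_step (hφ i) (hh i)
      (hK.of_isClosed_subset (isClosed_tsupport _) ((hb.2.1 i).trans (hSK i)))
      (fun x hx => hne i x (hb.2.1 i hx)) (fun j => (hu j).1 i)]
    refine (mul_le_mul_of_nonneg_left (hM i) (hh i).le).trans (le_of_eq ?_)
    rw [show k + 1 + 1 + 2 * m = k + 2 * (m + 1) by ring]
    ring

end NSP

/-- **Non-stationary phase with `h`-dependent phase** (Proposition A.1).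
If the amplitudes `a (·, h)` are smooth, supported in a fixed compact set `K`,
with seminorms bounded uniformly in `h`, the phases `φ (·, h)` are smooth with
seminorms bounded uniformly in `h` on `K`, and the phase gradient satisfies
`|∇φ| ≥ C h^(1/2 - ε)` on the support of the amplitude, then the oscillatory
integral `∫ a e^{iφ/h}` is `O(h^∞)`. -/
theorem nonstationary_phase
    (d : ℕ) (hd : 1 ≤ d)
    (K : Set (EuclideanSpace ℝ (Fin d))) (hK : IsCompact K)
    (h₀ ε C : ℝ) (hh₀ : h₀ ∈ Set.Ioc (0:ℝ) 1) (hε : 0 < ε) (hC : 0 < C)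
    (a : ℝ → EuclideanSpace ℝ (Fin d) → ℂ)
    (φ : ℝ → EuclideanSpace ℝ (Fin d) → ℝ)
    (ha_smooth : ∀ h ∈ Set.Ioc (0:ℝ) h₀, ContDiff ℝ (⊤ : ℕ∞) (a h))
    (hφ_smooth : ∀ h ∈ Set.Ioc (0:ℝ) h₀, ContDiff ℝ (⊤ : ℕ∞) (φ h))
    (ha_supp : ∀ h ∈ Set.Ioc (0:ℝ) h₀, Function.support (a h) ⊆ K)
    (ha_bound : ∀ n : ℕ, ∃ M : ℝ, ∀ h ∈ Set.Ioc (0:ℝ) h₀, ∀ x,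
        ‖iteratedFDeriv ℝ n (a h) x‖ ≤ M)
    (hφ_bound : ∀ n : ℕ, ∃ M : ℝ, ∀ h ∈ Set.Ioc (0:ℝ) h₀, ∀ x ∈ K,
        ‖iteratedFDeriv ℝ n (φ h) x‖ ≤ M)
    (hgrad : ∀ h ∈ Set.Ioc (0:ℝ) h₀, ∀ x ∈ Function.support (a h),
        C * h ^ ((1:ℝ)/2 - ε) ≤ ‖gradient (φ h) x‖) :
    ∀ N : ℕ, ∃ CN > 0, ∀ h ∈ Set.Ioc (0:ℝ) h₀,
      ‖∫ x, a h x * Complex.exp (Complex.I * (φ h x : ℂ) / (h : ℂ))‖ ≤ CN * h ^ N := by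
  intro N
  set δ := min ε (1 / 2) with hδ
  have hδ0 : 0 < δ := lt_min hε (by norm_num)
  have hδ1 : δ ≤ 1 / 2 := min_le_right _ _
  obtain ⟨m, hm⟩ := exists_nat_ge ((N : ℝ) / (2 * δ))
  have hcl : ∀ h ∈ Set.Ioc (0:ℝ) h₀, ∀ x ∈ tsupport (a h),
      C * h ^ ((1:ℝ)/2 - δ) ≤ ‖gradient (φ h) x‖ := by
    intro h hh
    have hclosed : IsClosed {x | C * h ^ ((1:ℝ)/2 - δ) ≤ ‖gradient (φ h) x‖} :=
      isClosed_le continuous_const (NSP.gradient_contDiff (hφ_smooth h hh)).continuous.norm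
    refine closure_minimal (fun x hx => ?_) hclosed
    refine le_trans ?_ (hgrad h hh x hx)
    refine mul_le_mul_of_nonneg_left ?_ hC.le
    exact Real.rpow_le_rpow_of_exponent_ge hh.1 (hh.2.trans hh₀.2)
      (by linarith [min_le_left ε (1 / 2)])
  have hKc : ∀ h ∈ Set.Ioc (0:ℝ) h₀, tsupport (a h) ⊆ K := fun h hh =>
    closure_minimal (ha_supp h hh) hK.isClosed
  have hL1 : ∀ h ∈ Set.Ioc (0:ℝ) h₀, 1 ≤ h ^ (δ - 1 / 2) := fun h hh =>
    Real.one_le_rpow_of_pos_of_le_one_of_nonpos hh.1 (hh.2.trans hh₀.2) (by linarith)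
  obtain ⟨M, hM⟩ := NSP.core (ι := Set.Ioc (0:ℝ) h₀) (fun i => tsupport (a i)) K hK
    (fun i => hKc i i.2) (fun i => isClosed_tsupport _) (fun i => φ i)
    (fun i => (i : ℝ) ^ (δ - 1 / 2)) C hC (fun i => hL1 i i.2) (fun i => hφ_smooth i i.2)
    (fun n => by
      obtain ⟨M, hM⟩ := hφ_bound n
      exact ⟨M, fun i x hx => hM i i.2 x (hKc i i.2 hx)⟩)
    (fun i x hx => by
      have h1 := hcl i i.2 x hx
      have hpos : (0:ℝ) < (i : ℝ) := i.2.1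
      calc C = (i : ℝ) ^ (δ - 1 / 2) * (C * (i : ℝ) ^ ((1:ℝ) / 2 - δ)) := by
            rw [mul_left_comm, ← Real.rpow_add hpos]; simp
        _ ≤ _ := mul_le_mul_of_nonneg_left h1 (Real.rpow_nonneg hpos.le _))
    (fun i => (i : ℝ)) (fun i => i.2.1) m 0 (fun i => a i)
    ⟨fun i => ha_smooth i i.2, fun i => subset_rfl, fun n => by
      obtain ⟨M, hM⟩ := ha_bound n
      refine ⟨|M|, fun i x => ((hM i i.2 x).trans (le_abs_self _)).trans ?_⟩
      exact le_mul_of_one_le_right (abs_nonneg _) (one_le_pow₀ (hL1 i i.2))⟩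
  refine ⟨|M| + 1, by positivity, fun h hh => ?_⟩
  have h1 := hM ⟨h, hh⟩
  simp only [zero_add] at h1
  have hpos := hh.1
  have hpow : h ^ m * (h ^ (δ - 1 / 2)) ^ (2 * m) ≤ h ^ N := by
    rw [← Real.rpow_natCast (h ^ (δ - 1 / 2)), ← Real.rpow_mul hpos.le, ← Real.rpow_natCast h m,
      ← Real.rpow_add hpos, ← Real.rpow_natCast h N]
    refine Real.rpow_le_rpow_of_exponent_ge hpos (hh.2.trans hh₀.2) ?_
    rw [div_le_iff₀ (by positivity)] at hm
    push_cast
    linarith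
  have hnn : 0 ≤ h ^ m * (h ^ (δ - 1 / 2)) ^ (2 * m) := by positivity
  calc _ ≤ M * (h ^ m * (h ^ (δ - 1 / 2)) ^ (2 * m)) := h1
    _ ≤ (|M| + 1) * (h ^ m * (h ^ (δ - 1 / 2)) ^ (2 * m)) := by
      gcongr; linarith [le_abs_self M]
    _ ≤ _ := by gcongr
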